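/- arXiv:1812.07785 — 2 statements merged into one kernel-verified Lean document; each statement's English description precedes it below -/
import Mathlib

section
/- Let ω = (q_n)_{n≥1} and ω̃ = (q̃_n)_{n≥1} be sequences of real numbers with 0 < q_n < 1, 0 < q̃_n < 1, admitting a common δ-lower bound (q_n ≥ δ and q̃_n ≥ δ for all n, for some δ > 0). If lim_{n→∞} log((1 − q̃_n)/(1 − q_n)) = 0, then the Hausdorff dimension of E(ω̃) equals the Hausdorff dimension of E(ω). -/
open Set Filter

/-- `ℓ_k = 2^{-k} ∏_{j=1}^k (1 - q_j)` (here `q` is 0-indexed: `q 0` is `q_1`). -/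
noncomputable def cantorLen (q : ℕ → ℝ) (k : ℕ) : ℝ :=
  (∏ j ∈ Finset.range k, (1 - q j)) / 2 ^ k

/-- Left endpoint `a_k(s) = ∑_{j=1}^k s_j (ℓ_{j-1} - ℓ_j)` of the interval `I_k(s)`. -/
noncomputable def cantorPt (q : ℕ → ℝ) {k : ℕ} (s : Fin k → Bool) : ℝ :=
  ∑ j : Fin k, if s j then cantorLen q j - cantorLen q (j + 1) else 0

/-- The level-`k` closed interval `I_k(s) = [a_k(s), a_k(s) + ℓ_k]`. -/
noncomputable def cantorInterval (q : ℕ → ℝ) {k : ℕ} (s : Fin k → Bool) : Set ℝ :=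
  Icc (cantorPt q s) (cantorPt q s + cantorLen q k)

/-- The level-`k` set `E_k(ω) = ⋃_{s ∈ {0,1}^k} I_k(s)`. -/
noncomputable def cantorLevel (q : ℕ → ℝ) (k : ℕ) : Set ℝ :=
  ⋃ s : Fin k → Bool, cantorInterval q s

/-- The random Cantor set `E(ω) = ⋂_k E_k(ω)`. -/
noncomputable def randomCantorSet (q : ℕ → ℝ) : Set ℝ :=
  ⋂ k : ℕ, cantorLevel q k

/-!
Covering `E(ω)` by its `2^k` level-`k` intervals and matching it with `[0, 1)` gives
`dim_H E(ω) = liminf_k (log 2^k / (-log ℓ_k))`, for all `q_n ∈ [0, 1)`.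

For the lower bound, send `t ∈ [0, 1)` to the point of `E(ω)` whose address is the binary expansion
of `t`. Distinct level-`k` left endpoints are at least `ℓ_k` apart, so if the images of `t` and `t'`
have distance `d` with `ℓ_{k+1} < d ≤ ℓ_k`, then `|t - t'| ≤ 3 · 2^{-k}`. If `2^{-k} ≤ C ℓ_k^s` for
all `k`, this is `|t - t'| ≤ 6 C d^s`, so the inverse map is `s`-Hölder onto a set of dimension `1`.
Since `d` is compared with `ℓ_{k+1}`, the gap lengths never enter.

As `-log ℓ_k ≥ k log 2`, the quotients for `ω` and `ω̃` differ by at most `1 / log 2` times the mean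
of the first `k` terms `log ((1 - q̃_n) / (1 - q_n))`, which tends to `0`.
-/

open MeasureTheory Topology
open scoped NNReal ENNReal

lemma dimH_le_dimH_image_div_of_edist_le {X Y : Type*} [EMetricSpace X] [EMetricSpace Y]
    {f : X → Y} {s : Set X} {C r : ℝ≥0} (hr : 0 < r)
    (hf : ∀ x ∈ s, ∀ y ∈ s, edist x y ≤ C * edist (f x) (f y) ^ (r : ℝ)) :
    dimH s ≤ dimH (f '' s) / r := by
  rcases s.eq_empty_or_nonempty with rfl | ⟨x₀, -⟩
  · simp
  have : Nonempty X := ⟨x₀⟩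
  have hinj : InjOn f s := fun x hx y hy hxy => by
    simpa [hxy, hr] using hf x hx y hy
  have hinv : LeftInvOn (Function.invFunOn f s) f s := hinj.leftInvOn_invFunOn
  have hholder : HolderOnWith C r (Function.invFunOn f s) (f '' s) := by
    rintro _ ⟨x, hx, rfl⟩ _ ⟨y, hy, rfl⟩
    simpa only [hinv hx, hinv hy] using hf x hx y hy
  simpa only [hinv.image_image] using hholder.dimH_image_le hr

lemma liminf_ofReal_eq_of_tendsto_sub {ι : Type*} {l : Filter ι} {u v : ι → ℝ}
    (h : Tendsto (fun i => u i - v i) l (𝓝 0)) :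
    liminf (fun i => ENNReal.ofReal (u i)) l = liminf (fun i => ENNReal.ofReal (v i)) l := by
  have le_of_tendsto_sub {u v : ι → ℝ} (h : Tendsto (fun i => u i - v i) l (𝓝 0)) :
      liminf (fun i => ENNReal.ofReal (u i)) l ≤ liminf (fun i => ENNReal.ofReal (v i)) l := by
    have herr : Tendsto (fun i => ENNReal.ofReal (u i - v i)) l (𝓝 0) := by
      simpa using ENNReal.tendsto_ofReal h
    calc liminf (fun i => ENNReal.ofReal (u i)) l
        ≤ liminf ((fun i => ENNReal.ofReal (u i - v i)) + fun i => ENNReal.ofReal (v i)) l :=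
          liminf_le_liminf <| .of_forall fun i => by
            simpa using ENNReal.ofReal_add_le (p := u i - v i) (q := v i)
      _ = liminf (fun i => ENNReal.ofReal (v i)) l :=
          ENNReal.liminf_add_of_left_tendsto_zero herr _
  exact le_antisymm (le_of_tendsto_sub h) (le_of_tendsto_sub (by simpa using h.neg))

lemma exists_succ_lt_and_le_of_exists_lt {α : Type*} [LinearOrder α] {f : ℕ → α} {d : α}
    (h0 : d ≤ f 0) (h : ∃ n, f n < d) : ∃ n, f (n + 1) < d ∧ d ≤ f n := by
  by_contra! hstep
  obtain ⟨n, hn⟩ := h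
  have hge (m : ℕ) : d ≤ f m := by
    induction m with
    | zero => exact h0
    | succ m ih => exact le_of_not_gt fun hlt => (hstep m hlt).not_ge ih
  exact hn.not_ge (hge n)

section CantorLen

variable {q : ℕ → ℝ}

lemma cantorLen_zero : cantorLen q 0 = 1 := by
  simp [cantorLen]

lemma cantorLen_succ (k : ℕ) :
    cantorLen q (k + 1) = cantorLen q k * ((1 - q k) / 2) := by
  rw [cantorLen, cantorLen, Finset.prod_range_succ, pow_succ, mul_div_mul_comm]

lemma cantorLen_pos (hq : ∀ n, q n < 1) (k : ℕ) : 0 < cantorLen q k :=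
  div_pos (Finset.prod_pos fun j _ => sub_pos.2 (hq j)) (by positivity)

lemma two_mul_cantorLen_succ_le (hq : ∀ n, q n ∈ Ico 0 1) (k : ℕ) :
    2 * cantorLen q (k + 1) ≤ cantorLen q k := by
  rw [cantorLen_succ]
  nlinarith [cantorLen_pos (fun n => (hq n).2) k, (hq k).1]

lemma cantorLen_le_half_pow (hq : ∀ n, q n ∈ Ico 0 1) (k : ℕ) :
    cantorLen q k ≤ (1 / 2) ^ k := by
  induction k with
  | zero => simp [cantorLen_zero]
  | succ k ih => rw [pow_succ]; linarith [two_mul_cantorLen_succ_le hq k]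

lemma tendsto_cantorLen (hq : ∀ n, q n ∈ Ico 0 1) : Tendsto (cantorLen q) atTop (𝓝 0) :=
  squeeze_zero (fun k => (cantorLen_pos (fun n => (hq n).2) k).le) (cantorLen_le_half_pow hq)
    (tendsto_pow_atTop_nhds_zero_of_lt_one (by norm_num) (by norm_num))

lemma log_cantorLen (hq : ∀ n, q n < 1) (k : ℕ) :
    Real.log (cantorLen q k) = ∑ j ∈ Finset.range k, Real.log (1 - q j) - k * Real.log 2 := by
  have hprod : ∏ j ∈ Finset.range k, (1 - q j) ≠ 0 :=
    Finset.prod_ne_zero_iff.2 fun j _ => (sub_pos.2 (hq j)).ne'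
  rw [cantorLen, Real.log_div hprod (by positivity),
    Real.log_prod fun j _ => (sub_pos.2 (hq j)).ne', Real.log_pow]

lemma mul_log_two_le_neg_log_cantorLen (hq : ∀ n, q n ∈ Ico 0 1) (k : ℕ) :
    k * Real.log 2 ≤ -Real.log (cantorLen q k) := by
  have hlog : ∑ j ∈ Finset.range k, Real.log (1 - q j) ≤ 0 :=
    Finset.sum_nonpos fun j _ =>
      Real.log_nonpos (sub_pos.2 (hq j).2).le (sub_le_self 1 (hq j).1)
  linarith [log_cantorLen (fun n => (hq n).2) k]

end CantorLen

section CoveringExponent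

variable {q : ℕ → ℝ}

/-- The `k`-th covering exponent `log 2^k / (-log ℓ_k)` of `E(ω)`: the `s` for which the `2^k`
intervals of level `k` satisfy `2^k ℓ_k^s = 1`. At `k = 0` it takes the junk value `0`. -/
noncomputable def coveringExponent (q : ℕ → ℝ) (k : ℕ) : ℝ :=
  k * Real.log 2 / -Real.log (cantorLen q k)

lemma coveringExponent_lt_iff (hq : ∀ n, q n ∈ Ico 0 1) {k : ℕ} (hk : k ≠ 0) (s : ℝ) :
    coveringExponent q k < s ↔ 2 ^ k * cantorLen q k ^ s < 1 := by
  have hlen : 0 < cantorLen q k := cantorLen_pos (fun n => (hq n).2) k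
  have hneg : 0 < -Real.log (cantorLen q k) :=
    (by positivity : 0 < k * Real.log 2).trans_le (mul_log_two_le_neg_log_cantorLen hq k)
  rw [coveringExponent, div_lt_iff₀ hneg, ← Real.log_neg_iff (by positivity),
    Real.log_mul (by positivity) (by positivity), Real.log_pow, Real.log_rpow hlen, mul_neg,
    ← lt_neg_iff_add_neg]

lemma abs_coveringExponent_le_one (hq : ∀ n, q n ∈ Ico 0 1) (k : ℕ) :
    |coveringExponent q k| ≤ 1 := by
  have hle := mul_log_two_le_neg_log_cantorLen hq k
  have hk : 0 ≤ k * Real.log 2 := by positivity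
  rw [coveringExponent, abs_of_nonneg (div_nonneg hk (hk.trans hle))]
  exact div_le_one_of_le₀ hle (hk.trans hle)

lemma abs_coveringExponent_sub_le {qt : ℕ → ℝ} (hq : ∀ n, q n ∈ Ico 0 1)
    (hqt : ∀ n, qt n ∈ Ico 0 1) (k : ℕ) :
    |coveringExponent qt k - coveringExponent q k| ≤
      |(k : ℝ)⁻¹ * ∑ i ∈ Finset.range k, Real.log ((1 - qt i) / (1 - q i))| / Real.log 2 := by
  rcases eq_or_ne k 0 with rfl | hk
  · simp [coveringExponent]
  have hsum : ∑ i ∈ Finset.range k, Real.log ((1 - qt i) / (1 - q i)) =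
      Real.log (cantorLen qt k) - Real.log (cantorLen q k) := by
    rw [log_cantorLen (fun n => (hqt n).2), log_cantorLen (fun n => (hq n).2),
      sub_sub_sub_cancel_right, ← Finset.sum_sub_distrib]
    exact Finset.sum_congr rfl fun i _ =>
      Real.log_div (sub_pos.2 (hqt i).2).ne' (sub_pos.2 (hq i).2).ne'
  have hmin : 0 < k * Real.log 2 := by positivity
  have hle := mul_log_two_le_neg_log_cantorLen hq k
  have hlet := mul_log_two_le_neg_log_cantorLen hqt k
  have hsub : coveringExponent qt k - coveringExponent q k = coveringExponent q k *
      ((Real.log (cantorLen qt k) - Real.log (cantorLen q k)) / -Real.log (cantorLen qt k)) := by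
    have hne : Real.log (cantorLen q k) ≠ 0 := by linarith
    have hnet : Real.log (cantorLen qt k) ≠ 0 := by linarith
    unfold coveringExponent
    field_simp
    ring
  rw [hsub, hsum, abs_mul, abs_div, abs_mul, abs_inv, Nat.abs_cast, inv_mul_eq_div, div_div,
    abs_of_pos (hmin.trans_le hlet)]
  exact (mul_le_of_le_one_left
    (div_nonneg (abs_nonneg _) (hmin.trans_le hlet).le) (abs_coveringExponent_le_one hq k)).trans
      (div_le_div_of_nonneg_left (abs_nonneg _) hmin hlet)

end CoveringExponent

section UpperBound

variable {q : ℕ → ℝ}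

lemma ediam_cantorInterval {k : ℕ} (s : Fin k → Bool) :
    Metric.ediam (cantorInterval q s) = ENNReal.ofReal (cantorLen q k) := by
  rw [cantorInterval, Real.ediam_Icc, add_sub_cancel_left]

lemma hausdorffMeasure_randomCantorSet_le (hq : ∀ n, q n ∈ Ico 0 1) (s : ℝ) :
    μH[s] (randomCantorSet q) ≤
      liminf (fun k => ENNReal.ofReal (2 ^ k * cantorLen q k ^ s)) atTop := by
  have hlen : Tendsto (fun k => ENNReal.ofReal (cantorLen q k)) atTop (𝓝 0) := by
    simpa using ENNReal.tendsto_ofReal (tendsto_cantorLen hq)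
  refine (Measure.hausdorffMeasure_le_liminf_sum s _ _ hlen
    (fun k (σ : Fin k → Bool) => cantorInterval q σ)
    (.of_forall fun k σ => (ediam_cantorInterval σ).le)
    (.of_forall fun k => iInter_subset _ k)).trans_eq ?_
  congr! 2 with k
  simp [ediam_cantorInterval, ENNReal.ofReal_mul,
    ENNReal.ofReal_rpow_of_pos (cantorLen_pos (fun n => (hq n).2) k)]

lemma dimH_randomCantorSet_le_liminf (hq : ∀ n, q n ∈ Ico 0 1) :
    dimH (randomCantorSet q) ≤
      liminf (fun k => ENNReal.ofReal (coveringExponent q k)) atTop := by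
  by_contra! hlt
  obtain ⟨s, hls, hsd⟩ := ENNReal.lt_iff_exists_nnreal_btwn.1 hlt
  have hfreq : ∃ᶠ k in atTop, ENNReal.ofReal (2 ^ k * cantorLen q k ^ (s : ℝ)) ≤ 1 := by
    refine ((frequently_lt_of_liminf_lt (by isBoundedDefault) hls).and_eventually
      (eventually_ne_atTop 0)).mono fun k ⟨hk, hk0⟩ => ?_
    have hexp : coveringExponent q k < s := by
      rw [← ENNReal.ofReal_coe_nnreal] at hk
      exact ENNReal.ofReal_lt_ofReal_iff'.1 hk |>.1
    exact ENNReal.ofReal_le_one.2 ((coveringExponent_lt_iff hq hk0 s).1 hexp).le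
  have hfin : μH[s] (randomCantorSet q) ≤ 1 :=
    (hausdorffMeasure_randomCantorSet_le hq s).trans (liminf_le_of_frequently_le' hfreq)
  exact hsd.not_ge (dimH_le_of_hausdorffMeasure_ne_top (hfin.trans_lt ENNReal.one_lt_top).ne)

end UpperBound

section LowerBound

variable {q : ℕ → ℝ}

lemma cantorPt_succ (x : ℕ → Bool) (k : ℕ) :
    cantorPt q (fun j : Fin (k + 1) => x j) = cantorPt q (fun j : Fin k => x j) +
      if x k then cantorLen q k - cantorLen q (k + 1) else 0 := by
  simp [cantorPt, Fin.sum_univ_castSucc]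

lemma antitone_cantorInterval (hq : ∀ n, q n ∈ Ico 0 1) (x : ℕ → Bool) :
    Antitone fun k => cantorInterval q fun j : Fin k => x j := by
  refine antitone_nat_of_succ_le fun k => ?_
  have hlen := two_mul_cantorLen_succ_le hq k
  have hpos := cantorLen_pos (fun n => (hq n).2) (k + 1)
  rw [cantorInterval, cantorInterval, cantorPt_succ]
  apply Icc_subset_Icc <;> split_ifs <;> linarith

lemma exists_forall_mem_cantorInterval (hq : ∀ n, q n ∈ Ico 0 1) (x : ℕ → Bool) :
    ∃ u, ∀ k, u ∈ cantorInterval q fun j : Fin k => x j :=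
  ⟨_, mem_iInter.1 <| ciSup_mem_iInter_Icc_of_antitone_Icc (antitone_cantorInterval hq x)
    fun k => le_add_of_nonneg_right (cantorLen_pos (fun n => (hq n).2) k).le⟩

/-- The `j`-th binary digit of `t`, with `j = 0` the first one after the binary point. It serves
as the address in `E(ω)` of the point matched with `t ∈ [0, 1)`. -/
noncomputable def dyadicBit (t : ℝ) (j : ℕ) : Bool :=
  decide (⌊2 ^ (j + 1) * t⌋ = 2 * ⌊2 ^ j * t⌋ + 1)

lemma floor_two_pow_succ_mul (t : ℝ) (k : ℕ) :
    ⌊2 ^ (k + 1) * t⌋ = 2 * ⌊2 ^ k * t⌋ + if dyadicBit t k then 1 else 0 := by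
  have hlower : 2 * ⌊2 ^ k * t⌋ ≤ ⌊2 ^ (k + 1) * t⌋ := by
    rw [Int.le_floor, pow_succ]
    push_cast
    linarith [Int.floor_le (2 ^ k * t)]
  have hupper : ⌊2 ^ (k + 1) * t⌋ < 2 * ⌊2 ^ k * t⌋ + 2 := by
    rw [Int.floor_lt, pow_succ]
    push_cast
    linarith [Int.lt_floor_add_one (2 ^ k * t)]
  simp only [dyadicBit, decide_eq_true_eq]
  split_ifs <;> lia

lemma floor_sub_floor_mul_cantorLen_le (hq : ∀ n, q n ∈ Ico 0 1) {t t' : ℝ} (ht : t ∈ Ico 0 1)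
    (ht' : t' ∈ Ico 0 1) (htt' : t ≤ t') (k : ℕ) :
    (⌊2 ^ k * t'⌋ - ⌊2 ^ k * t⌋ : ℤ) * cantorLen q k ≤
      cantorPt q (fun j : Fin k => dyadicBit t' j) -
        cantorPt q (fun j : Fin k => dyadicBit t j) := by
  have hmono (k : ℕ) : ⌊2 ^ k * t⌋ ≤ ⌊2 ^ k * t'⌋ := by gcongr
  induction k with
  | zero => simp [cantorPt, Int.floor_eq_zero_iff.2 ht, Int.floor_eq_zero_iff.2 ht']
  | succ k ih =>
    set D : ℤ := ⌊2 ^ k * t'⌋ - ⌊2 ^ k * t⌋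
    set e : ℤ := (if dyadicBit t' k then 1 else 0) - if dyadicBit t k then 1 else 0 with he
    have hstep : ⌊2 ^ (k + 1) * t'⌋ - ⌊2 ^ (k + 1) * t⌋ = 2 * D + e := by
      rw [floor_two_pow_succ_mul, floor_two_pow_succ_mul]; ring
    -- `D + e < 0` would force `D = 0` and `e = -1`, contradicting `0 ≤ 2 * D + e`.
    have hDe : 0 ≤ D + e := by
      have := hmono k
      have := hmono (k + 1)
      lia
    have hexcess : 0 ≤ ((D + e : ℤ) : ℝ) * (cantorLen q k - 2 * cantorLen q (k + 1)) :=
      mul_nonneg (by exact_mod_cast hDe) (sub_nonneg.2 (two_mul_cantorLen_succ_le hq k))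
    have hpt : cantorPt q (fun j : Fin (k + 1) => dyadicBit t' j) -
        cantorPt q (fun j : Fin (k + 1) => dyadicBit t j) =
        cantorPt q (fun j : Fin k => dyadicBit t' j) - cantorPt q (fun j : Fin k => dyadicBit t j) +
          e * (cantorLen q k - cantorLen q (k + 1)) := by
      rw [cantorPt_succ, cantorPt_succ, he]
      push_cast
      simp only [sub_mul, ite_mul, one_mul, zero_mul]
      ring
    rw [hstep, hpt]
    push_cast at hexcess ⊢
    linarith

lemma two_pow_mul_abs_sub_le_three (hq : ∀ n, q n ∈ Ico 0 1) {t t' u u' : ℝ}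
    (ht : t ∈ Ico 0 1) (ht' : t' ∈ Ico 0 1) {k : ℕ}
    (hu : u ∈ cantorInterval q fun j : Fin k => dyadicBit t j)
    (hu' : u' ∈ cantorInterval q fun j : Fin k => dyadicBit t' j)
    (huu' : |u - u'| ≤ cantorLen q k) : 2 ^ k * |t - t'| ≤ 3 := by
  wlog htt' : t ≤ t' generalizing t t' u u'
  · rw [abs_sub_comm] at huu' ⊢
    exact this ht' ht hu' hu huu' (le_of_not_ge htt')
  have hindex : ((⌊2 ^ k * t'⌋ - ⌊2 ^ k * t⌋ : ℤ) : ℝ) ≤ 2 := by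
    refine le_of_mul_le_mul_right ?_ (cantorLen_pos (fun n => (hq n).2) k)
    have hslope := floor_sub_floor_mul_cantorLen_le hq ht ht' htt' k
    linarith [hu.2, hu'.1, (abs_le.1 huu').1]
  rw [abs_sub_comm, abs_of_nonneg (sub_nonneg.2 htt'), mul_sub]
  push_cast at hindex
  linarith [Int.lt_floor_add_one (2 ^ k * t'), Int.floor_le (2 ^ k * t)]

lemma abs_sub_le_mul_rpow (hq : ∀ n, q n ∈ Ico 0 1) {C s : ℝ} (hs : 0 ≤ s)
    (hC : ∀ k, (1 / 2) ^ k ≤ C * cantorLen q k ^ s) {t t' u u' : ℝ}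
    (ht : t ∈ Ico 0 1) (ht' : t' ∈ Ico 0 1)
    (hu : ∀ k, u ∈ cantorInterval q fun j : Fin k => dyadicBit t j)
    (hu' : ∀ k, u' ∈ cantorInterval q fun j : Fin k => dyadicBit t' j) :
    |t - t'| ≤ 6 * C * |u - u'| ^ s := by
  have hC0 : 0 ≤ C := zero_le_one.trans (by simpa [cantorLen_zero] using hC 0)
  have hclose {k : ℕ} (hk : |u - u'| ≤ cantorLen q k) : |t - t'| ≤ 3 * (1 / 2) ^ k := by
    rw [one_div, inv_pow, ← div_eq_mul_inv, le_div_iff₀' (by positivity)]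
    exact two_pow_mul_abs_sub_le_three hq ht ht' (hu k) (hu' k) hk
  rcases (abs_nonneg (u - u')).eq_or_lt with hd | hd
  · have hlim : Tendsto (fun k : ℕ => 3 * (1 / 2 : ℝ) ^ k) atTop (𝓝 0) := by
      simpa using (tendsto_pow_atTop_nhds_zero_of_lt_one (r := (1 / 2 : ℝ))
        (by norm_num) (by norm_num)).const_mul 3
    refine (ge_of_tendsto' hlim fun k => hclose ?_).trans (by positivity)
    exact hd.symm.trans_le (cantorLen_pos (fun n => (hq n).2) k).le
  · have hle : |u - u'| ≤ cantorLen q 0 := by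
      have h0 := hu 0
      have h0' := hu' 0
      simp only [cantorInterval, cantorPt, Finset.univ_eq_empty, Finset.sum_empty, mem_Icc]
        at h0 h0'
      exact abs_sub_le_iff.2 ⟨by linarith, by linarith⟩
    have hsmall : ∃ k, cantorLen q k < |u - u'| :=
      ((tendsto_cantorLen hq).eventually_lt_const hd).exists
    obtain ⟨k, hlt, hge⟩ := exists_succ_lt_and_le_of_exists_lt hle hsmall
    calc |t - t'| ≤ 6 * (1 / 2) ^ (k + 1) := (hclose hge).trans_eq (by ring)
      _ ≤ 6 * (C * cantorLen q (k + 1) ^ s) := by gcongr; exact hC _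
      _ ≤ 6 * (C * |u - u'| ^ s) := by
          gcongr
          exact (cantorLen_pos (fun n => (hq n).2) _).le
      _ = 6 * C * |u - u'| ^ s := (mul_assoc _ _ _).symm

lemma le_dimH_randomCantorSet_of_half_pow_le (hq : ∀ n, q n ∈ Ico 0 1) {C : ℝ} {s : ℝ≥0}
    (hs : 0 < s) (hC : ∀ k, (1 / 2) ^ k ≤ C * cantorLen q k ^ (s : ℝ)) :
    s ≤ dimH (randomCantorSet q) := by
  choose φ hφ using fun t => exists_forall_mem_cantorInterval hq (dyadicBit t)
  have hinverse : ∀ t ∈ Ico (0 : ℝ) 1, ∀ t' ∈ Ico (0 : ℝ) 1,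
      edist t t' ≤ (6 * C).toNNReal * edist (φ t) (φ t') ^ (s : ℝ) := fun t ht t' ht' => by
    rw [edist_dist, edist_dist, ENNReal.ofReal_rpow_of_nonneg dist_nonneg s.coe_nonneg,
      ← ENNReal.ofReal, ← ENNReal.ofReal_mul' (by positivity)]
    exact ENNReal.ofReal_le_ofReal (abs_sub_le_mul_rpow hq s.coe_nonneg hC ht ht' (hφ t) (hφ t'))
  have himage : φ '' Ico 0 1 ⊆ randomCantorSet q := image_subset_iff.2 fun t _ =>
    mem_iInter.2 fun k => mem_iUnion.2 ⟨_, hφ t k⟩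
  have hunit : dimH (Ico (0 : ℝ) 1) = 1 := by
    rw [Real.dimH_of_nonempty_interior (by simp [interior_Ico]),
      Module.finrank_self, Nat.cast_one]
  have hdiv : 1 ≤ dimH (randomCantorSet q) / s :=
    hunit.symm.trans_le <| (dimH_le_dimH_image_div_of_edist_le hs hinverse).trans <|
      ENNReal.div_le_div_right (dimH_mono himage) _
  simpa using (ENNReal.le_div_iff_mul_le (by simp [hs.ne']) (by simp)).1 hdiv

lemma exists_half_pow_le_mul_rpow (hq : ∀ n, q n ∈ Ico 0 1) {s : ℝ}
    (hs : ∀ᶠ k in atTop, s ≤ coveringExponent q k) :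
    ∃ C, ∀ k, (1 / 2) ^ k ≤ C * cantorLen q k ^ s := by
  have hpos (k : ℕ) : 0 < cantorLen q k ^ s :=
    Real.rpow_pos_of_pos (cantorLen_pos (fun n => (hq n).2) k) s
  have hev : ∀ᶠ k in atTop, (1 / 2) ^ k / cantorLen q k ^ s ≤ 1 := by
    filter_upwards [hs, eventually_ne_atTop 0] with k hk hk0
    have hcover := not_lt.1 (mt (coveringExponent_lt_iff hq hk0 s).2 hk.not_gt)
    rwa [div_le_one (hpos k), one_div, inv_pow, inv_le_iff_one_le_mul₀' (by positivity)]
  obtain ⟨C, hC⟩ := (isBoundedUnder_of_eventually_le hev).bddAbove_range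
  exact ⟨C, fun k => (div_le_iff₀ (hpos k)).1 (hC (mem_range_self k))⟩

lemma liminf_le_dimH_randomCantorSet (hq : ∀ n, q n ∈ Ico 0 1) :
    liminf (fun k => ENNReal.ofReal (coveringExponent q k)) atTop ≤
      dimH (randomCantorSet q) := by
  refine ENNReal.le_of_forall_nnreal_lt fun s hs => ?_
  rcases eq_zero_or_pos s with rfl | hs0
  · simp
  have hev : ∀ᶠ k in atTop, (s : ℝ) ≤ coveringExponent q k := by
    filter_upwards [eventually_lt_of_lt_liminf hs] with k hk
    exact (ENNReal.lt_ofReal_iff_toReal_lt ENNReal.coe_ne_top |>.1 hk).le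
  obtain ⟨C, hC⟩ := exists_half_pow_le_mul_rpow hq hev
  exact le_dimH_randomCantorSet_of_half_pow_le hq hs0 hC

end LowerBound

theorem dimH_randomCantorSet {q : ℕ → ℝ} (hq : ∀ n, q n ∈ Ico 0 1) :
    dimH (randomCantorSet q) = liminf (fun k => ENNReal.ofReal (coveringExponent q k)) atTop :=
  le_antisymm (dimH_randomCantorSet_le_liminf hq) (liminf_le_dimH_randomCantorSet hq)

theorem dimH_randomCantorSet_eq_of_log_ratio_tendsto_zero_general {q qt : ℕ → ℝ}
    (hq : ∀ n, q n ∈ Ico 0 1) (hqt : ∀ n, qt n ∈ Ico 0 1)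
    (hlim : Tendsto (fun n : ℕ => (n : ℝ)⁻¹ *
      ∑ i ∈ Finset.range n, Real.log ((1 - qt i) / (1 - q i))) atTop (𝓝 0)) :
    dimH (randomCantorSet qt) = dimH (randomCantorSet q) := by
  rw [dimH_randomCantorSet hqt, dimH_randomCantorSet hq]
  refine liminf_ofReal_eq_of_tendsto_sub ?_
  exact squeeze_zero_norm (abs_coveringExponent_sub_le hq hqt)
    (by simpa using hlim.abs.div_const (Real.log 2))

/-- If ω and ω̃ admit a common δ-lower bound and
lim_{n→∞} log((1 - q̃_n)/(1 - q_n)) = 0, then the Hausdorff dimension of E(ω̃) equals the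
Hausdorff dimension of E(ω). -/
theorem dimH_randomCantorSet_eq_of_log_ratio_tendsto_zero
    (q qt : ℕ → ℝ) (δ : ℝ) (hδ : 0 < δ)
    (hq : ∀ n, δ ≤ q n ∧ q n < 1) (hqt : ∀ n, δ ≤ qt n ∧ qt n < 1)
    (hlim : Tendsto (fun n => Real.log ((1 - qt n) / (1 - q n))) atTop (nhds 0)) :
    dimH (randomCantorSet qt) = dimH (randomCantorSet q) := by
  exact dimH_randomCantorSet_eq_of_log_ratio_tendsto_zero_general
    (fun n => ⟨hδ.le.trans (hq n).1, (hq n).2⟩) (fun n => ⟨hδ.le.trans (hqt n).1, (hqt n).2⟩)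
    hlim.cesaro
end

section
/- Let 0 < δ < 1 and δ ≤ q̃ ≤ q < 1 be real numbers. Define x = (1/2)((1+δ) + (1−δ)q) and x̃ = (1/2)((1+δ) + (1−δ)q̃). Then 0 < 1 + δ(1−q) < 1+δ ≤ (1+δ)·x/x̃, and log( ( log((1+δ)·x/x̃) − log(1 + δ(1−q)) ) / ( log(1+δ) − log(1 + δ(1−q)) ) ) ≤ ( log((1+δ)/(1 + δ(1−δ))) )^{−1} · (q − q̃). -/
/-!
Multiplying the outer radius `R` of an annulus with radii `r < R` by `t` adds `log t` to its
logarithmic width, so the radial map onto the wider annulus has dilatation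
`1 + log t / log (R / r)`, whose logarithm is at most `log t / log (R / r)`. Here `t` is the
quotient of the centers `x` and `x̃`, which exceeds `1` by at most `q - q̃`, and the width
`log (R / r)`, with `r = 1 + δ (1 - q)`, only decreases when `q` is replaced by a lower bound.
-/

section RadialDilatation

/-- The maximal dilatation of the radial quasiconformal map between the round annuli
`{r < |z| < R'}` and `{r < |z| < R}`, for `0 < r < R ≤ R'`: the quotient of their logarithmic
widths. -/
noncomputable def radialDilatation (r R R' : ℝ) : ℝ :=
  (Real.log R' - Real.log r) / (Real.log R - Real.log r)

variable {r R t : ℝ}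

theorem radialDilatation_mul_right (hr : 0 < r) (hrR : r < R) (ht : t ≠ 0) :
    radialDilatation r R (R * t) = 1 + Real.log t / Real.log (R / r) := by
  have hR : 0 < R := hr.trans hrR
  have hwidth : Real.log R - Real.log r ≠ 0 := (sub_pos.2 (Real.log_lt_log hr hrR)).ne'
  rw [radialDilatation, Real.log_mul hR.ne' ht, Real.log_div hR.ne' hr.ne', add_sub_right_comm,
    add_div, div_self hwidth]

theorem log_radialDilatation_mul_right_le (hr : 0 < r) (hrR : r < R) (ht : 1 ≤ t) :
    Real.log (radialDilatation r R (R * t)) ≤ Real.log t / Real.log (R / r) := by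
  have hwidth : 0 < Real.log (R / r) := Real.log_pos ((one_lt_div hr).2 hrR)
  have hexcess : 0 ≤ Real.log t / Real.log (R / r) := div_nonneg (Real.log_nonneg ht) hwidth.le
  rw [radialDilatation_mul_right hr hrR (by positivity)]
  linarith [Real.log_le_sub_one_of_pos (show 0 < 1 + Real.log t / Real.log (R / r) by positivity)]

end RadialDilatation

section InnerCircleCenter

/-- The center `x` of an inner circle in the pair of pants with parameter `q`: the midpoint of
its diameter from `q` to `1 + δ (1 - q)`, written in the expanded form used in the paper. -/
noncomputable def innerCircleCenter (δ q : ℝ) : ℝ :=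
  1 / 2 * ((1 + δ) + (1 - δ) * q)

variable {δ q qt : ℝ}

theorem innerCircleCenter_pos (hδ0 : 0 < δ) (hδ1 : δ ≤ 1) (hq : 0 ≤ q) :
    0 < innerCircleCenter δ q := by
  have : 0 ≤ 1 - δ := sub_nonneg.2 hδ1
  rw [innerCircleCenter]
  positivity

theorem innerCircleCenter_mono (hδ1 : δ ≤ 1) : Monotone (innerCircleCenter δ) := by
  intro qt q h
  have : 0 ≤ 1 - δ := sub_nonneg.2 hδ1
  unfold innerCircleCenter
  gcongr

theorem one_le_innerCircleCenter_div (hδ0 : 0 < δ) (hδ1 : δ ≤ 1) (hqt : 0 ≤ qt) (hq : qt ≤ q) :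
    1 ≤ innerCircleCenter δ q / innerCircleCenter δ qt :=
  (one_le_div (innerCircleCenter_pos hδ0 hδ1 hqt)).2 (innerCircleCenter_mono hδ1 hq)

theorem innerCircleCenter_div_sub_one_le (hδ0 : 0 < δ) (hδ1 : δ ≤ 1) (hqt : 0 ≤ qt)
    (hq : qt ≤ q) :
    innerCircleCenter δ q / innerCircleCenter δ qt - 1 ≤ q - qt := by
  have hpos : 0 < innerCircleCenter δ qt := innerCircleCenter_pos hδ0 hδ1 hqt
  have hslope : (1 - δ) / 2 ≤ innerCircleCenter δ qt := by
    have : 0 ≤ (1 - δ) * qt := mul_nonneg (sub_nonneg.2 hδ1) hqt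
    rw [innerCircleCenter]
    linarith
  rw [div_sub_one hpos.ne', div_le_iff₀ hpos]
  calc innerCircleCenter δ q - innerCircleCenter δ qt
      = (q - qt) * ((1 - δ) / 2) := by unfold innerCircleCenter; ring
    _ ≤ (q - qt) * innerCircleCenter δ qt :=
        mul_le_mul_of_nonneg_left hslope (sub_nonneg.2 hq)

theorem log_innerCircleCenter_div_le (hδ0 : 0 < δ) (hδ1 : δ ≤ 1) (hqt : 0 ≤ qt) (hq : qt ≤ q) :
    Real.log (innerCircleCenter δ q / innerCircleCenter δ qt) ≤ q - qt :=
  (Real.log_le_sub_one_of_pos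
    (zero_lt_one.trans_le (one_le_innerCircleCenter_div hδ0 hδ1 hqt hq))).trans
    (innerCircleCenter_div_sub_one_le hδ0 hδ1 hqt hq)

end InnerCircleCenter

theorem dilatation_estimate_step6_general {δ c q qt : ℝ} (hδ0 : 0 < δ) (hδ1 : δ ≤ 1)
    (hc : 0 < c) (hcq : c ≤ q) (hqt : 0 ≤ qt) (hq : qt ≤ q) (hr : 0 < 1 + δ * (1 - q)) :
    1 + δ * (1 - q) < 1 + δ ∧
      1 + δ ≤ (1 + δ) * innerCircleCenter δ q / innerCircleCenter δ qt ∧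
      Real.log (radialDilatation (1 + δ * (1 - q)) (1 + δ)
          ((1 + δ) * innerCircleCenter δ q / innerCircleCenter δ qt)) ≤
        (Real.log ((1 + δ) / (1 + δ * (1 - c))))⁻¹ * (q - qt) := by
  have hcr : 1 + δ * (1 - q) ≤ 1 + δ * (1 - c) := by gcongr
  have hcR : 1 + δ * (1 - c) < 1 + δ := by linarith [mul_pos hδ0 hc]
  have hcwidth : 0 < Real.log ((1 + δ) / (1 + δ * (1 - c))) :=
    Real.log_pos ((one_lt_div (hr.trans_le hcr)).2 hcR)
  have hwidth : Real.log ((1 + δ) / (1 + δ * (1 - c))) ≤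
      Real.log ((1 + δ) / (1 + δ * (1 - q))) :=
    Real.log_le_log (div_pos (by positivity) (hr.trans_le hcr))
      (div_le_div_of_nonneg_left (by positivity) hr hcr)
  have hcenter := one_le_innerCircleCenter_div hδ0 hδ1 hqt hq
  rw [mul_div_assoc]
  refine ⟨hcr.trans_lt hcR, le_mul_of_one_le_right (by positivity) hcenter, ?_⟩
  calc Real.log (radialDilatation (1 + δ * (1 - q)) (1 + δ)
          ((1 + δ) * (innerCircleCenter δ q / innerCircleCenter δ qt)))
      ≤ Real.log (innerCircleCenter δ q / innerCircleCenter δ qt) /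
          Real.log ((1 + δ) / (1 + δ * (1 - q))) :=
        log_radialDilatation_mul_right_le hr (hcr.trans_lt hcR) hcenter
    _ ≤ (q - qt) / Real.log ((1 + δ) / (1 + δ * (1 - c))) :=
        div_le_div₀ (sub_nonneg.2 hq) (log_innerCircleCenter_div_le hδ0 hδ1 hqt hq) hcwidth hwidth
    _ = (Real.log ((1 + δ) / (1 + δ * (1 - c))))⁻¹ * (q - qt) := div_eq_inv_mul _ _

/-- With 0 < δ < 1, δ ≤ q̃ ≤ q < 1 and
x = (1/2)((1+δ) + (1−δ)q), x̃ = (1/2)((1+δ) + (1−δ)q̃),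
one has 0 < 1 + δ(1−q) < 1+δ ≤ (1+δ)·x/x̃ and
log( (log((1+δ)x/x̃) − log(1 + δ(1−q))) / (log(1+δ) − log(1 + δ(1−q))) ) ≤
  (log((1+δ)/(1 + δ(1−δ))))⁻¹ · (q − q̃). -/
theorem dilatation_estimate_step6
    (δ q qt x xt : ℝ) (hδ0 : 0 < δ) (hδ1 : δ < 1)
    (h0 : δ ≤ qt) (h1 : qt ≤ q) (h2 : q < 1)
    (hx : x = 1 / 2 * ((1 + δ) + (1 - δ) * q))
    (hxt : xt = 1 / 2 * ((1 + δ) + (1 - δ) * qt)) :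
    0 < 1 + δ * (1 - q) ∧ 1 + δ * (1 - q) < 1 + δ ∧ 1 + δ ≤ (1 + δ) * x / xt ∧
      Real.log ((Real.log ((1 + δ) * x / xt) - Real.log (1 + δ * (1 - q))) /
          (Real.log (1 + δ) - Real.log (1 + δ * (1 - q)))) ≤
        (Real.log ((1 + δ) / (1 + δ * (1 - δ))))⁻¹ * (q - qt) := by
  subst hx hxt
  have hr : 0 < 1 + δ * (1 - q) := by linarith [mul_pos hδ0 (sub_pos.2 h2)]
  exact ⟨hr, dilatation_estimate_step6_general hδ0 hδ1.le hδ0 (h0.trans h1) (hδ0.le.trans h0) h1 hr⟩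
end
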